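/- For every integer n ≥ 2 there exists a constant C = C(n) > 0 with the following property: for every R > 0 and every λ₁ ∈ ℝ such that (a) λ₁ admits a nonzero function u, continuously differentiable on [0,R] and twice differentiable on (0,R), with u(0) = u(R) = 0 and −u'' + V₁·u = λ₁·u on (0,R), and (b) λ₁ is minimal with this property (every μ admitting such a nonzero solution satisfies μ ≥ λ₁), one has: for v(t) = sin(πt/R), (∫₀ᴿ (v'² + V₂·v²) dt)/(∫₀ᴿ v² dt) ≤ λ₁ + C/R³. In particular the fundamental gap λ₂(B_R) − λ₁(B_R) of geodesic balls B_R ⊂ ℍⁿ is at most C(n)/R³, so (λ₂ − λ₁)·R² → 0 as R → ∞. -/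

import Mathlib

/-- `lam` is a Dirichlet eigenvalue of the Schrödinger operator `-d²/dt² + V` on `[0, R]`. -/
def IsDirichletEigenvalue (V : ℝ → ℝ) (R lam : ℝ) : Prop :=
  ∃ u : ℝ → ℝ,
    (∃ t ∈ Set.Icc (0:ℝ) R, u t ≠ 0) ∧
    ContinuousOn u (Set.Icc 0 R) ∧
    (∀ t ∈ Set.Ioo (0:ℝ) R, DifferentiableAt ℝ u t) ∧
    ContinuousOn (deriv u) (Set.Icc 0 R) ∧
    (∀ t ∈ Set.Ioo (0:ℝ) R, DifferentiableAt ℝ (deriv u) t) ∧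
    u 0 = 0 ∧ u R = 0 ∧
    (∀ t ∈ Set.Ioo (0:ℝ) R, -(deriv (deriv u) t) + V t * u t = lam * u t)

/-- The Rayleigh quotient `R_V[u] = (∫₀ᴿ (u'² + V u²))/(∫₀ᴿ u²)` on `[0, R]`. -/
noncomputable def Rayleigh (V u : ℝ → ℝ) (R : ℝ) : ℝ :=
  (∫ t in (0:ℝ)..R, (deriv u t) ^ 2 + V t * (u t) ^ 2) / (∫ t in (0:ℝ)..R, (u t) ^ 2)

/-- The potential `V₁(t) = ((n−1)/4)·(n−1 + (n−3)/sinh² t)`. -/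
noncomputable def V1 (n : ℕ) (t : ℝ) : ℝ :=
  ((n : ℝ) - 1) / 4 * (((n : ℝ) - 1) + ((n : ℝ) - 3) / (Real.sinh t) ^ 2)

/-- The potential `V₂(t) = ((n−1)/4)·(n−1 + (n+1)/sinh² t)`. -/
noncomputable def V2 (n : ℕ) (t : ℝ) : ℝ :=
  ((n : ℝ) - 1) / 4 * (((n : ℝ) - 1) + ((n : ℝ) + 1) / (Real.sinh t) ^ 2)

/-!
Let `u` be a Dirichlet eigenfunction with eigenvalue `lam`. If `w' + w² ≤ V - μ` on `(0, R)`, i.e.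
if `w` is the logarithmic derivative of a positive supersolution of `-d²/dt² + V` at level `μ`, then
Picone's identity gives `(u u' - u² w)' ≥ (μ - lam) u²`; the flux on the left vanishes at both ends,
so `μ ≤ lam`.

Since `(n - 1)(n - 3) ≥ -1`, the potential `V₁` dominates the critical Hardy potential
`(n - 1)²/4 - 1/(4 sinh² t)`. For the latter `sin (k (t + 3)) √(t / (t + 1))` is a supersolution at
level `(n - 1)²/4 + k²` whenever `k (R + 3) < π`: the bounded shift of the interval costs only
`O(R⁻³)` in `k²`. On the other side, `sin²(π t / R) / sinh² t` is at most `R⁻²` times an integrable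
function, so the singular part of `V₂` also contributes only `O(R⁻³)` to the Rayleigh quotient.
-/

open Real Set Filter Topology Asymptotics MeasureTheory

section PiconeInequality

lemma eq_of_monotoneOn_Ioo_of_tendsto {α β : Type*} [LinearOrder α] [TopologicalSpace α]
    [OrderTopology α] [DenselyOrdered α] [PartialOrder β] [TopologicalSpace β]
    [OrderClosedTopology β] {f : α → β} {a b t : α} {l : β} (hf : MonotoneOn f (Ioo a b))
    (ha : Tendsto f (𝓝[>] a) (𝓝 l)) (hb : Tendsto f (𝓝[<] b) (𝓝 l)) (ht : t ∈ Ioo a b) :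
    f t = l := by
  have := nhdsGT_neBot_of_exists_gt ⟨t, ht.1⟩
  have := nhdsLT_neBot_of_exists_lt ⟨t, ht.2⟩
  apply le_antisymm
  · refine ge_of_tendsto hb ?_
    filter_upwards [Ioo_mem_nhdsLT ht.2] with s hs
    exact hf ht ⟨ht.1.trans hs.1, hs.2⟩ hs.1.le
  · refine le_of_tendsto ha ?_
    filter_upwards [Ioo_mem_nhdsGT ht.1] with s hs
    exact hf ⟨hs.1, hs.2.trans ht.2⟩ ht hs.2.le

lemma eq_zero_of_hasDerivAt_nonneg_of_tendsto {f f' : ℝ → ℝ} {a b l t : ℝ}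
    (hf : ∀ s ∈ Ioo a b, HasDerivAt f (f' s) s) (hf' : ∀ s ∈ Ioo a b, 0 ≤ f' s)
    (ha : Tendsto f (𝓝[>] a) (𝓝 l)) (hb : Tendsto f (𝓝[<] b) (𝓝 l)) (ht : t ∈ Ioo a b) :
    f' t = 0 := by
  have hmono : MonotoneOn f (Ioo a b) := by
    refine monotoneOn_of_hasDerivWithinAt_nonneg (f' := f') (convex_Ioo a b)
      (fun s hs => (hf s hs).continuousAt.continuousWithinAt) ?_ ?_
    · rw [interior_Ioo]
      exact fun s hs => (hf s hs).hasDerivWithinAt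
    · rwa [interior_Ioo]
  have hconst : f =ᶠ[𝓝 t] fun _ => l := by
    filter_upwards [Ioo_mem_nhds ht.1 ht.2] with s hs
    exact eq_of_monotoneOn_Ioo_of_tendsto hmono ha hb hs
  exact (hf t ht).unique ((hasDerivAt_const t l).congr_of_eventuallyEq hconst)

/-- The flux `u u' - u² w` in Picone's identity, where `w` plays the role of the logarithmic
derivative `φ'/φ` of a positive comparison function `φ`. -/
noncomputable def piconeFlux (u w : ℝ → ℝ) (t : ℝ) : ℝ :=
  u t * deriv u t - u t ^ 2 * w t

lemma hasDerivAt_piconeFlux {u w : ℝ → ℝ} {t u'' w' : ℝ} (hu : DifferentiableAt ℝ u t)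
    (hu' : HasDerivAt (deriv u) u'' t) (hw : HasDerivAt w w' t) :
    HasDerivAt (piconeFlux u w)
      ((deriv u t - u t * w t) ^ 2 + u t * u'' - u t ^ 2 * (w' + w t ^ 2)) t := by
  refine ((hu.hasDerivAt.mul hu').sub ((hu.hasDerivAt.pow 2).mul hw)).congr_deriv ?_
  simp only [Nat.cast_ofNat, Nat.add_one_sub_one, pow_one, Pi.pow_apply]
  ring

lemma tendsto_piconeFlux_zero {u w : ℝ → ℝ} {a : ℝ} {l : Filter ℝ} (hl : l ≤ 𝓝 a)
    (hu : u =O[l] (· - a)) (hu' : deriv u =O[l] (1 : ℝ → ℝ)) (hw : w =O[l] (fun t => (t - a)⁻¹)) :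
    Tendsto (piconeFlux u w) l (𝓝 0) := by
  have hlim : Tendsto (· - a) l (𝓝 0) :=
    (tendsto_sub_nhds_zero_iff.2 tendsto_id).mono_left hl
  have hfirst : (fun t => u t * deriv u t) =O[l] (· - a) := by
    simpa using hu.mul hu'
  have hsecond : (fun t => u t ^ 2 * w t) =O[l] (· - a) := by
    simpa [sq] using (hu.pow 2).mul hw
  exact (hfirst.sub hsecond).trans_tendsto hlim

lemma tendsto_piconeFlux_nhdsGT_zero {u w : ℝ → ℝ} {a b : ℝ} (hab : a < b)
    (hu : ContinuousOn u (Icc a b)) (hd : DifferentiableOn ℝ u (Ioo a b))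
    (hu' : ContinuousOn (deriv u) (Icc a b)) (hua : u a = 0)
    (hw : w =O[𝓝[>] a] (fun t => (t - a)⁻¹)) :
    Tendsto (piconeFlux u w) (𝓝[>] a) (𝓝 0) := by
  have ha : a ∈ Icc a b := left_mem_Icc.2 hab.le
  have hlim : Tendsto (deriv u) (𝓝[>] a) (𝓝 (deriv u a)) :=
    nhdsWithin_Ioo_eq_nhdsGT hab ▸ (hu' a ha).mono Ioo_subset_Icc_self
  have hderiv : HasDerivWithinAt u (deriv u a) (Ici a) a :=
    hasDerivWithinAt_Ici_of_tendsto_deriv hd ((hu a ha).mono Ioo_subset_Icc_self)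
      (Ioo_mem_nhdsGT hab) hlim
  have hu_bigO : u =O[𝓝[>] a] (· - a) := by
    simpa only [hua, sub_zero] using
      hderiv.differentiableWithinAt.isBigO_sub.mono (nhdsWithin_mono a Ioi_subset_Ici_self)
  exact tendsto_piconeFlux_zero nhdsWithin_le_nhds hu_bigO (hlim.isBigO_one ℝ) hw

lemma tendsto_piconeFlux_nhdsLT_zero {u w : ℝ → ℝ} {a b : ℝ} (hab : a < b)
    (hu : ContinuousOn u (Icc a b)) (hd : DifferentiableOn ℝ u (Ioo a b))
    (hu' : ContinuousOn (deriv u) (Icc a b)) (hub : u b = 0)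
    (hw : w =O[𝓝[<] b] (fun t => (t - b)⁻¹)) :
    Tendsto (piconeFlux u w) (𝓝[<] b) (𝓝 0) := by
  have hb : b ∈ Icc a b := right_mem_Icc.2 hab.le
  have hlim : Tendsto (deriv u) (𝓝[<] b) (𝓝 (deriv u b)) :=
    nhdsWithin_Ioo_eq_nhdsLT hab ▸ (hu' b hb).mono Ioo_subset_Icc_self
  have hderiv : HasDerivWithinAt u (deriv u b) (Iic b) b :=
    hasDerivWithinAt_Iic_of_tendsto_deriv hd ((hu b hb).mono Ioo_subset_Icc_self)
      (Ioo_mem_nhdsLT hab) hlim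
  have hu_bigO : u =O[𝓝[<] b] (· - b) := by
    simpa only [hub, sub_zero] using
      hderiv.differentiableWithinAt.isBigO_sub.mono (nhdsWithin_mono b Iio_subset_Iic_self)
  exact tendsto_piconeFlux_zero nhdsWithin_le_nhds hu_bigO (hlim.isBigO_one ℝ) hw

lemma isBigO_inv_sub_of_continuousAt {w : ℝ → ℝ} {a : ℝ} (hw : ContinuousAt w a) :
    w =O[𝓝[<] a] (fun t => (t - a)⁻¹) := by
  have hlim : Tendsto (· - a) (𝓝[<] a) (𝓝 0) :=
    (tendsto_sub_nhds_zero_iff.2 tendsto_id).mono_left nhdsWithin_le_nhds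
  have hinv : (fun _ => (1 : ℝ)) =O[𝓝[<] a] (fun t => (t - a)⁻¹) := by
    simpa using (hlim.isBigO_one ℝ).inv_rev (by
      filter_upwards [self_mem_nhdsWithin] with t (ht : t < a) h
      exact absurd h (sub_neg.2 ht).ne)
  exact ((hw.mono_left nhdsWithin_le_nhds).isBigO_one ℝ).trans hinv

lemma IsDirichletEigenvalue.pos {V : ℝ → ℝ} {R lam : ℝ} (h : IsDirichletEigenvalue V R lam) :
    0 < R := by
  obtain ⟨u, ⟨s, hs, hus⟩, -, -, -, -, h0, -, -⟩ := h
  rcases (hs.1.trans hs.2).eq_or_lt with rfl | hR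
  · exact absurd (le_antisymm hs.2 hs.1 ▸ h0) hus
  · exact hR

theorem IsDirichletEigenvalue.le_of_riccati {V w : ℝ → ℝ} {R lam μ : ℝ}
    (h : IsDirichletEigenvalue V R lam) (hw : ∀ t ∈ Ioo 0 R, DifferentiableAt ℝ w t)
    (hriccati : ∀ t ∈ Ioo 0 R, deriv w t + w t ^ 2 ≤ V t - μ)
    (hw_zero : w =O[𝓝[>] 0] (fun t => t⁻¹)) (hw_R : w =O[𝓝[<] R] (fun t => (t - R)⁻¹)) :
    μ ≤ lam := by
  have hR := h.pos
  obtain ⟨u, ⟨s, hs, hus⟩, hc, hd, hc', hd', hu0, huR, heq⟩ := h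
  have hdOn : DifferentiableOn ℝ u (Ioo 0 R) := fun t ht => (hd t ht).differentiableWithinAt
  by_contra! hlt
  have hflux_zero : Tendsto (piconeFlux u w) (𝓝[>] 0) (𝓝 0) :=
    tendsto_piconeFlux_nhdsGT_zero hR hc hdOn hc' hu0 (by simpa only [sub_zero] using hw_zero)
  have hflux_R : Tendsto (piconeFlux u w) (𝓝[<] R) (𝓝 0) :=
    tendsto_piconeFlux_nhdsLT_zero hR hc hdOn hc' huR hw_R
  have hflux_deriv (t : ℝ) (ht : t ∈ Ioo 0 R) :=
    hasDerivAt_piconeFlux (hd t ht) (hd' t ht).hasDerivAt (hw t ht).hasDerivAt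
  have hpicone : ∀ t ∈ Ioo 0 R, (μ - lam) * u t ^ 2 ≤
      (deriv u t - u t * w t) ^ 2 + u t * deriv (deriv u) t - u t ^ 2 * (deriv w t + w t ^ 2) := by
    intro t ht
    have hu'' : deriv (deriv u) t = (V t - lam) * u t := by linarith [heq t ht]
    rw [hu'']
    nlinarith [sq_nonneg (deriv u t - u t * w t),
      mul_le_mul_of_nonneg_left (hriccati t ht) (sq_nonneg (u t))]
  have hu_Ioo : ∀ t ∈ Ioo 0 R, u t = 0 := by
    intro t ht
    have hzero := eq_zero_of_hasDerivAt_nonneg_of_tendsto hflux_deriv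
      (fun r hr => (mul_nonneg (sub_pos.2 hlt).le (sq_nonneg _)).trans (hpicone r hr))
      hflux_zero hflux_R ht
    have hsq : u t ^ 2 ≤ 0 :=
      nonpos_of_mul_nonpos_right ((hpicone t ht).trans hzero.le) (sub_pos.2 hlt)
    exact pow_eq_zero_iff two_ne_zero |>.1 (hsq.antisymm (sq_nonneg _))
  rcases eq_endpoints_or_mem_Ioo_of_mem_Icc hs with rfl | rfl | hs
  · exact hus hu0
  · exact hus huR
  · exact hus (hu_Ioo s hs)

end PiconeInequality

section HardyBarrier

lemma sq_add_pow_four_div_three_le_sinh_sq (t : ℝ) : t ^ 2 + t ^ 4 / 3 ≤ sinh t ^ 2 := by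
  wlog ht : 0 ≤ t generalizing t
  · simpa [Even.neg_pow (by decide : Even 4)] using this (-t) (by linarith)
  have hsinh : t + t ^ 3 / 6 ≤ sinh t := by
    have hseries := sum_le_hasSum (Finset.range 2) (fun i _ => by positivity) (hasSum_sinh t)
    norm_num [Finset.sum_range_succ, Nat.factorial] at hseries
    exact hseries
  calc t ^ 2 + t ^ 4 / 3 ≤ (t + t ^ 3 / 6) ^ 2 := by nlinarith [sq_nonneg (t ^ 3)]
    _ ≤ sinh t ^ 2 := by gcongr

lemma mul_cot_le_one {x : ℝ} (hx : 0 < x) (hxπ : x < π) : x * cot x ≤ 1 := by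
  have hsin : 0 < sin x := sin_pos_of_pos_of_lt_pi hx hxπ
  rw [cot_eq_cos_div_sin, mul_div_assoc', div_le_one hsin]
  rcases lt_or_ge x (π / 2) with hlt | hge
  · have hcos : 0 < cos x := cos_pos_of_mem_Ioo ⟨by linarith, hlt⟩
    rw [← le_div_iff₀ hcos, ← tan_eq_sin_div_cos]
    exact le_tan hx.le hlt
  · have hcos : cos x ≤ 0 := cos_nonpos_of_pi_div_two_le_of_le hge (by linarith)
    exact (mul_nonpos_of_nonneg_of_nonpos hx.le hcos).trans hsin.le

lemma hasDerivAt_mul_cot {k a t : ℝ} (hsin : sin (k * (t + a)) ≠ 0) :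
    HasDerivAt (fun t => k * cot (k * (t + a))) (-k ^ 2 - (k * cot (k * (t + a))) ^ 2) t := by
  have harg : HasDerivAt (fun t => k * (t + a)) k t := by
    simpa using ((hasDerivAt_id t).add_const a).const_mul k
  simp only [cot_eq_cos_div_sin]
  refine ((harg.cos.div harg.sin hsin).const_mul k).congr_deriv ?_
  field_simp

/-- The logarithmic derivative of `sin (k (t + 3)) √(t / (t + 1))`, the comparison function for the
critical Hardy potential `-1 / (4 sinh² t)`. The square root matches the behaviour `√t` at the
singularity, and the shift `3` is what `hardy_correction_le` needs. -/
noncomputable def hardyBarrier (k t : ℝ) : ℝ :=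
  k * cot (k * (t + 3)) + 1 / (2 * (t * (t + 1)))

lemma hasDerivAt_hardyBarrier {k t : ℝ} (ht : 0 < t) (hsin : sin (k * (t + 3)) ≠ 0) :
    HasDerivAt (hardyBarrier k) (-k ^ 2 - (k * cot (k * (t + 3))) ^ 2
      - (2 * t + 1) / (2 * (t * (t + 1)) ^ 2)) t := by
  have hden : HasDerivAt (fun t : ℝ => 2 * (t * (t + 1))) (2 * (2 * t + 1)) t :=
    (((hasDerivAt_id t).mul ((hasDerivAt_id t).add_const 1)).const_mul 2).congr_deriv
      (by simp only [id]; ring)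
  have hinv := (hasDerivAt_const t (1 : ℝ)).div hden (by positivity)
  refine ((hasDerivAt_mul_cot hsin).add hinv).congr_deriv ?_
  field_simp
  ring

lemma hardy_correction_le {t : ℝ} (ht : 0 < t) :
    -(2 * t + 1) / (2 * (t * (t + 1)) ^ 2) + (1 / (2 * (t * (t + 1)))) ^ 2
      + 2 * (1 / (t + 3)) * (1 / (2 * (t * (t + 1)))) ≤ -(1 / (4 * sinh t ^ 2)) := by
  have hsinh := sq_add_pow_four_div_three_le_sinh_sq t
  have hden_pos : 0 < 4 * sinh t ^ 2 := by
    have := sinh_pos_iff.2 ht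
    positivity
  -- After inserting `t² + t⁴/3 ≤ sinh² t`, the difference of the two sides is `2 t³ (t - 1)²`.
  have hpoly : t ^ 2 * (t + 1) ^ 2 * (t + 3) ≤ 3 * (3 * t + 1) * sinh t ^ 2 := by
    have hinsert := mul_le_mul_of_nonneg_left hsinh (show 0 ≤ 3 * (3 * t + 1) by positivity)
    have hsquare : 0 ≤ 2 * t ^ 3 * (t - 1) ^ 2 := by positivity
    linarith
  calc _ = -(3 * (3 * t + 1) / (4 * (t ^ 2 * (t + 1) ^ 2 * (t + 3)))) := by field_simp; ring
    _ ≤ -(1 / (4 * sinh t ^ 2)) := by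
      rw [neg_le_neg_iff, div_le_div_iff₀ hden_pos (by positivity)]
      linarith

lemma deriv_hardyBarrier_add_sq_le {k t : ℝ} (hk : 0 < k) (ht : 0 < t) (hkt : k * (t + 3) < π) :
    deriv (hardyBarrier k) t + hardyBarrier k t ^ 2 ≤ -(1 / (4 * sinh t ^ 2)) - k ^ 2 := by
  have hsin : sin (k * (t + 3)) ≠ 0 := (sin_pos_of_pos_of_lt_pi (by positivity) hkt).ne'
  have hcot : k * cot (k * (t + 3)) ≤ 1 / (t + 3) := by
    rw [le_div_iff₀ (by positivity)]
    linarith [mul_cot_le_one (show 0 < k * (t + 3) by positivity) hkt]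
  have hcross : 2 * (k * cot (k * (t + 3))) * (1 / (2 * (t * (t + 1))))
      ≤ 2 * (1 / (t + 3)) * (1 / (2 * (t * (t + 1)))) := by gcongr
  have hcorr := hardy_correction_le ht
  rw [neg_div] at hcorr
  rw [(hasDerivAt_hardyBarrier ht hsin).deriv, hardyBarrier, add_sq]
  linarith

lemma hardyBarrier_isBigO_inv {k : ℝ} (hsin : sin (k * 3) ≠ 0) :
    hardyBarrier k =O[𝓝[>] 0] (fun t => t⁻¹) := by
  have hcot : ContinuousAt (fun t => k * cot (k * (t + 3))) 0 :=
    (hasDerivAt_mul_cot (by simpa using hsin)).continuousAt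
  have hfactor : ContinuousAt (fun t : ℝ => t * (k * cot (k * (t + 3))) + 1 / (2 * (t + 1))) 0 := by
    fun_prop (disch := norm_num)
  have hbounded := (hfactor.mono_left nhdsWithin_le_nhds).isBigO_one ℝ (l := 𝓝[>] 0)
  refine (hbounded.mul (isBigO_refl (fun t : ℝ => t⁻¹) _)).congr' ?_ (by simp)
  filter_upwards [self_mem_nhdsWithin] with t (ht : 0 < t)
  rw [hardyBarrier]
  field_simp

theorem IsDirichletEigenvalue.add_sq_le_of_hardy {V : ℝ → ℝ} {R lam A k : ℝ}
    (h : IsDirichletEigenvalue V R lam)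
    (hV : ∀ t ∈ Ioo 0 R, A - 1 / (4 * sinh t ^ 2) ≤ V t) (hk : 0 < k) (hkR : k * (R + 3) < π) :
    A + k ^ 2 ≤ lam := by
  have hkt {t : ℝ} (ht : t ≤ R) : k * (t + 3) < π :=
    (mul_le_mul_of_nonneg_left (by linarith) hk.le).trans_lt hkR
  have hsin {t : ℝ} (ht0 : 0 ≤ t) (htR : t ≤ R) : sin (k * (t + 3)) ≠ 0 :=
    (sin_pos_of_pos_of_lt_pi (by positivity) (hkt htR)).ne'
  have hdiff {t : ℝ} (ht : 0 < t) (htR : t ≤ R) : DifferentiableAt ℝ (hardyBarrier k) t :=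
    (hasDerivAt_hardyBarrier ht (hsin ht.le htR)).differentiableAt
  refine h.le_of_riccati (fun t ht => hdiff ht.1 ht.2.le) (fun t ht => ?_)
    (hardyBarrier_isBigO_inv (by simpa only [zero_add] using hsin le_rfl h.pos.le))
    (isBigO_inv_sub_of_continuousAt (hdiff h.pos le_rfl).continuousAt)
  linarith [deriv_hardyBarrier_add_sq_le hk ht.1 (hkt ht.2.le), hV t ht]

end HardyBarrier

section RayleighQuotient

lemma integral_sin_pi_mul_div_sq {R : ℝ} (hR : R ≠ 0) :
    ∫ t in (0 : ℝ)..R, sin (π * t / R) ^ 2 = R / 2 := by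
  simp_rw [mul_div_right_comm π _ R]
  rw [intervalIntegral.integral_comp_mul_left (fun x => sin x ^ 2) (by positivity),
    div_mul_cancel₀ _ hR, integral_sin_sq, mul_zero, sin_pi, sin_zero, smul_eq_mul]
  field_simp
  ring

lemma integral_cos_pi_mul_div_sq {R : ℝ} (hR : R ≠ 0) :
    ∫ t in (0 : ℝ)..R, cos (π * t / R) ^ 2 = R / 2 := by
  simp_rw [mul_div_right_comm π _ R]
  rw [intervalIntegral.integral_comp_mul_left (fun x => cos x ^ 2) (by positivity),
    div_mul_cancel₀ _ hR, integral_cos_sq, mul_zero, sin_pi, sin_zero, smul_eq_mul]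
  field_simp
  ring

lemma deriv_sin_pi_mul_div (R t : ℝ) :
    deriv (fun t => sin (π * t / R)) t = π / R * cos (π * t / R) := by
  have harg : HasDerivAt (fun t => π * t / R) (π / R) t := by
    simpa using ((hasDerivAt_id t).const_mul π).div_const R
  rw [harg.sin.deriv, mul_comm]

lemma rayleigh_const_add_sin {q : ℝ → ℝ} {R : ℝ} (A : ℝ) (hR : R ≠ 0)
    (hq : IntervalIntegrable (fun t => q t * sin (π * t / R) ^ 2) volume 0 R) :
    Rayleigh (fun t => A + q t) (fun t => sin (π * t / R)) R
      = A + (π / R) ^ 2 + 2 / R * ∫ t in (0 : ℝ)..R, q t * sin (π * t / R) ^ 2 := by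
  have hcos : IntervalIntegrable (fun t => (π / R) ^ 2 * cos (π * t / R) ^ 2) volume 0 R :=
    Continuous.intervalIntegrable (by fun_prop) _ _
  have hsin : IntervalIntegrable (fun t => A * sin (π * t / R) ^ 2) volume 0 R :=
    Continuous.intervalIntegrable (by fun_prop) _ _
  have hsplit (t : ℝ) : deriv (fun t => sin (π * t / R)) t ^ 2 + (A + q t) * sin (π * t / R) ^ 2
      = (π / R) ^ 2 * cos (π * t / R) ^ 2 + A * sin (π * t / R) ^ 2
        + q t * sin (π * t / R) ^ 2 := by
    rw [deriv_sin_pi_mul_div]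
    ring
  simp only [Rayleigh, hsplit]
  rw [intervalIntegral.integral_add (hcos.add hsin) hq, intervalIntegral.integral_add hcos hsin,
    intervalIntegral.integral_const_mul, intervalIntegral.integral_const_mul,
    integral_cos_pi_mul_div_sq hR, integral_sin_pi_mul_div_sq hR]
  field_simp
  ring

lemma sin_sq_div_sinh_sq_le (k t : ℝ) :
    sin (k * t) ^ 2 / sinh t ^ 2 ≤ 3 * k ^ 2 * (1 / (1 + t ^ 2)) := by
  rcases eq_or_ne t 0 with rfl | ht
  · rw [mul_zero, sin_zero, zero_pow two_ne_zero, zero_div]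
    positivity
  have hsinh : t ^ 2 * (1 + t ^ 2) ≤ 3 * sinh t ^ 2 := by
    linarith [sq_add_pow_four_div_three_le_sinh_sq t, sq_nonneg t]
  have hsinh_pos : 0 < sinh t ^ 2 := by
    have := sinh_ne_zero.2 ht
    positivity
  have hsin : sin (k * t) ^ 2 ≤ (k * t) ^ 2 := sq_le_sq.2 abs_sin_le_abs
  rw [mul_one_div, div_le_div_iff₀ hsinh_pos (by positivity)]
  calc sin (k * t) ^ 2 * (1 + t ^ 2) ≤ (k * t) ^ 2 * (1 + t ^ 2) := by gcongr
    _ = k ^ 2 * (t ^ 2 * (1 + t ^ 2)) := by ring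
    _ ≤ k ^ 2 * (3 * sinh t ^ 2) := by gcongr
    _ = 3 * k ^ 2 * sinh t ^ 2 := by ring

lemma intervalIntegrable_sin_sq_div_sinh_sq (k a b : ℝ) :
    IntervalIntegrable (fun t => sin (k * t) ^ 2 / sinh t ^ 2) volume a b := by
  refine (intervalIntegral.intervalIntegrable_one_div_one_add_sq.const_mul (3 * k ^ 2)).mono_fun'
    (Measurable.aestronglyMeasurable (by fun_prop)) (Eventually.of_forall fun t => ?_)
  beta_reduce
  rw [norm_of_nonneg (by positivity)]
  exact sin_sq_div_sinh_sq_le k t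

lemma integral_sin_sq_div_sinh_sq_le (k : ℝ) {R : ℝ} (hR : 0 ≤ R) :
    ∫ t in (0 : ℝ)..R, sin (k * t) ^ 2 / sinh t ^ 2 ≤ 3 * π / 2 * k ^ 2 :=
  calc ∫ t in (0 : ℝ)..R, sin (k * t) ^ 2 / sinh t ^ 2
      ≤ ∫ t in (0 : ℝ)..R, 3 * k ^ 2 * (1 / (1 + t ^ 2)) :=
        intervalIntegral.integral_mono_on hR (intervalIntegrable_sin_sq_div_sinh_sq k 0 R)
          (intervalIntegral.intervalIntegrable_one_div_one_add_sq.const_mul _)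
          (fun t _ => sin_sq_div_sinh_sq_le k t)
    _ = 3 * k ^ 2 * arctan R := by
        rw [intervalIntegral.integral_const_mul, integral_one_div_one_add_sq, arctan_zero, sub_zero]
    _ ≤ 3 * k ^ 2 * (π / 2) := by gcongr; exact (arctan_lt_pi_div_two R).le
    _ = 3 * π / 2 * k ^ 2 := by ring

lemma rayleigh_V2_sin_le (n : ℕ) {R : ℝ} (hR : 0 < R) :
    Rayleigh (V2 n) (fun t => sin (π * t / R)) R
      ≤ ((n : ℝ) - 1) ^ 2 / 4 + (π / R) ^ 2 + 3 / 4 * n ^ 2 * π ^ 3 / R ^ 3 := by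
  set I := ∫ t in (0 : ℝ)..R, sin (π / R * t) ^ 2 / sinh t ^ 2 with hI
  have hV2 : V2 n = fun t => ((n : ℝ) - 1) ^ 2 / 4 + ((n : ℝ) ^ 2 - 1) / 4 * (1 / sinh t ^ 2) := by
    funext t
    rw [V2]
    ring
  have hterm (t : ℝ) : ((n : ℝ) ^ 2 - 1) / 4 * (1 / sinh t ^ 2) * sin (π * t / R) ^ 2
      = ((n : ℝ) ^ 2 - 1) / 4 * (sin (π / R * t) ^ 2 / sinh t ^ 2) := by
    rw [mul_div_right_comm π t R]
    ring
  have hI_nonneg : 0 ≤ I := intervalIntegral.integral_nonneg hR.le fun t _ => by positivity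
  have hI_le : I ≤ 3 * π / 2 * (π / R) ^ 2 := integral_sin_sq_div_sinh_sq_le _ hR.le
  rw [hV2, rayleigh_const_add_sin _ hR.ne' (by
    simpa only [hterm] using (intervalIntegrable_sin_sq_div_sinh_sq (π / R) 0 R).const_mul _)]
  simp only [hterm, intervalIntegral.integral_const_mul, ← hI]
  gcongr
  calc 2 / R * (((n : ℝ) ^ 2 - 1) / 4 * I)
      ≤ 2 / R * ((n : ℝ) ^ 2 / 4 * (3 * π / 2 * (π / R) ^ 2)) := by
        gcongr
        exact sub_le_self _ zero_le_one
    _ = 3 / 4 * n ^ 2 * π ^ 3 / R ^ 3 := by ring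

end RayleighQuotient

lemma hardy_le_V1 (n : ℕ) (t : ℝ) :
    ((n : ℝ) - 1) ^ 2 / 4 - 1 / (4 * sinh t ^ 2) ≤ V1 n t := by
  have hsquare : 0 ≤ ((n : ℝ) - 2) ^ 2 / 4 * (1 / sinh t ^ 2) := by positivity
  calc ((n : ℝ) - 1) ^ 2 / 4 - 1 / (4 * sinh t ^ 2)
      ≤ ((n : ℝ) - 1) ^ 2 / 4 - 1 / (4 * sinh t ^ 2) + ((n : ℝ) - 2) ^ 2 / 4 * (1 / sinh t ^ 2) :=
        le_add_of_nonneg_right hsquare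
    _ = V1 n t := by rw [V1]; ring

lemma one_div_sq_sub_one_div_add_sq_le {R a : ℝ} (hR : 0 < R) (ha : 0 ≤ a) :
    1 / R ^ 2 - 1 / (R + a) ^ 2 ≤ 2 * a / R ^ 3 := by
  rw [div_sub_div _ _ (by positivity) (by positivity),
    div_le_div_iff₀ (by positivity) (by positivity)]
  have : 0 ≤ 3 * a ^ 2 * R ^ 3 + 2 * a ^ 3 * R ^ 2 := by positivity
  linarith

theorem fundamental_gap_ball_upper_bound_general (n : ℕ) {R lam : ℝ}
    (h : IsDirichletEigenvalue (V1 n) R lam) :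
    Rayleigh (V2 n) (fun t => sin (π * t / R)) R
      ≤ lam + (3 / 4 * n ^ 2 * π ^ 3 + 8 * π ^ 2) / R ^ 3 := by
  have hR := h.pos
  have hlower : ((n : ℝ) - 1) ^ 2 / 4 + (π / (R + 4)) ^ 2 ≤ lam := by
    refine h.add_sq_le_of_hardy (fun t _ => hardy_le_V1 n t) (by positivity) ?_
    rw [div_mul_eq_mul_div, div_lt_iff₀ (by positivity)]
    gcongr
    norm_num
  have hshift : (π / R) ^ 2 - (π / (R + 4)) ^ 2 ≤ 8 * π ^ 2 / R ^ 3 := by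
    calc (π / R) ^ 2 - (π / (R + 4)) ^ 2
      _ = π ^ 2 * (1 / R ^ 2 - 1 / (R + 4) ^ 2) := by
        rw [div_pow, div_pow]
        ring
      _ ≤ π ^ 2 * (2 * 4 / R ^ 3) := by
        gcongr
        exact one_div_sq_sub_one_div_add_sq_le hR (by norm_num)
      _ = 8 * π ^ 2 / R ^ 3 := by ring
  rw [add_div]
  linarith [rayleigh_V2_sin_le n hR]

/-- For every `n ≥ 2` there is `C = C(n) > 0` such that for every `R > 0`: if `λ₁` is the
smallest Dirichlet eigenvalue of `-d²/dt² + V₁` on `[0, R]` (it is an eigenvalue and every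
eigenvalue is `≥ λ₁`), then the Rayleigh quotient of `v(t) = sin(πt/R)` for `V₂` is at most
`λ₁ + C/R³`.  This is the fundamental gap estimate `λ₂(B_R) − λ₁(B_R) ≤ C(n)/R³` for
geodesic balls `B_R ⊂ ℍⁿ`, so `(λ₂ − λ₁)R² → 0` as `R → ∞`. -/
theorem fundamental_gap_ball_upper_bound (n : ℕ) (hn : 2 ≤ n) :
    ∃ C : ℝ, 0 < C ∧ ∀ R : ℝ, 0 < R → ∀ lam1 : ℝ,
      IsDirichletEigenvalue (V1 n) R lam1 →
      (∀ μ : ℝ, IsDirichletEigenvalue (V1 n) R μ → lam1 ≤ μ) →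
      Rayleigh (V2 n) (fun t => Real.sin (Real.pi * t / R)) R ≤ lam1 + C / R ^ 3 := by
  refine ⟨3 / 4 * n ^ 2 * π ^ 3 + 8 * π ^ 2, by positivity, fun R _ lam1 hlam1 _ => ?_⟩
  exact fundamental_gap_ball_upper_bound_general n hlam1
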